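/- Let (Σ₀, R) be a string rewriting system. If every critical branching of R is joinable (i.e., for every critical branching (f, g) the targets of f and g have a common reduct under the reflexive-transitive closure of →_R), then the one-step rewriting relation →_R is locally confluent: for any two rewriting steps with the same source, their targets have a common reduct. -/

import Mathlib

open Relation

/-- A rewriting step `(u, r, v)` of a string rewriting system `R` over the free monoid on `α`:
`u` and `v` are the context words and `r = (a, b)` is a rule of `R`. -/
structure Step {α : Type*} (R : Set (FreeMonoid α × FreeMonoid α)) where
  left : FreeMonoid α
  rule : FreeMonoid α × FreeMonoid α
  right : FreeMonoid α
  rule_mem : rule ∈ R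

namespace Step

variable {α : Type*} {R : Set (FreeMonoid α × FreeMonoid α)}

/-- The source `u·a·v` of the rewriting step `(u, (a,b), v)`. -/
def src (f : Step R) : FreeMonoid α := f.left * f.rule.1 * f.right

/-- The target `u·b·v` of the rewriting step `(u, (a,b), v)`. -/
def tgt (f : Step R) : FreeMonoid α := f.left * f.rule.2 * f.right

/-- The whiskered step `u·(p, r, q)·v = (u·p, r, q·v)`. -/
def whisker (u : FreeMonoid α) (f : Step R) (v : FreeMonoid α) : Step R :=
  ⟨u * f.left, f.rule, f.right * v, f.rule_mem⟩

end Step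

/-- The one-step rewriting relation `→_R`. -/
def RwStep {α : Type*} (R : Set (FreeMonoid α × FreeMonoid α)) (x y : FreeMonoid α) : Prop :=
  ∃ f : Step R, f.src = x ∧ f.tgt = y

/-- Two words are joinable if they have a common reduct under `→*_R`. -/
def Joinable {α : Type*} (R : Set (FreeMonoid α × FreeMonoid α)) (y z : FreeMonoid α) : Prop :=
  ∃ w, ReflTransGen (RwStep R) y w ∧ ReflTransGen (RwStep R) z w

/-- `(f, g)` is a Peiffer branching in the given order: the common source factors as
`u·a·v·b·w` with `f = (u, (a,a'), v·b·w)` and `g = (u·a·v, (b,b'), w)`. -/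
def PeifferOriented {α : Type*} {R : Set (FreeMonoid α × FreeMonoid α)}
    (f g : Step R) : Prop :=
  ∃ v : FreeMonoid α, g.left = f.left * f.rule.1 * v ∧ f.right = v * g.rule.1 * g.right

/-- A Peiffer branching, up to permutation of the two steps. -/
def Peiffer {α : Type*} {R : Set (FreeMonoid α × FreeMonoid α)} (f g : Step R) : Prop :=
  PeifferOriented f g ∨ PeifferOriented g f

/-- An overlapping branching: a local branching that is neither aspherical nor Peiffer. -/
def Overlapping {α : Type*} {R : Set (FreeMonoid α × FreeMonoid α)} (f g : Step R) : Prop :=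
  f.src = g.src ∧ f ≠ g ∧ ¬ Peiffer f g

/-- The order on local branchings generated by `(f, g) ≤ (u·f·v, u·g·v)`. -/
def BranchLE {α : Type*} {R : Set (FreeMonoid α × FreeMonoid α)}
    (p q : Step R × Step R) : Prop :=
  ∃ u v : FreeMonoid α, q.1 = Step.whisker u p.1 v ∧ q.2 = Step.whisker u p.2 v

/-- A critical branching: an overlapping branching that is minimal for the order `BranchLE`. -/
def Critical {α : Type*} {R : Set (FreeMonoid α × FreeMonoid α)} (f g : Step R) : Prop :=
  Overlapping f g ∧
    ∀ f' g' : Step R, Overlapping f' g' → BranchLE (f', g') (f, g) → (f', g') = (f, g)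

section Rewriting

variable {α : Type*} {R : Set (FreeMonoid α × FreeMonoid α)} {f g : Step R}

namespace Step

theorem src_whisker (u : FreeMonoid α) (f : Step R) (v : FreeMonoid α) :
    (f.whisker u v).src = u * f.src * v := by
  simp only [src, whisker, mul_assoc]

theorem tgt_whisker (u : FreeMonoid α) (f : Step R) (v : FreeMonoid α) :
    (f.whisker u v).tgt = u * f.tgt * v := by
  simp only [tgt, whisker, mul_assoc]

theorem whisker_whisker (u u' : FreeMonoid α) (f : Step R) (v' v : FreeMonoid α) :
    (f.whisker u' v').whisker u v = f.whisker (u * u') (v' * v) := by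
  simp only [whisker, mul_assoc]

theorem whisker_one_one (f : Step R) : f.whisker 1 1 = f := by
  simp only [whisker, one_mul, mul_one]

end Step

theorem RwStep.of_mem {r : FreeMonoid α × FreeMonoid α} (hr : r ∈ R) (u v : FreeMonoid α) :
    RwStep R (u * r.1 * v) (u * r.2 * v) :=
  ⟨⟨u, r, v, hr⟩, rfl, rfl⟩

theorem RwStep.mul_mul {x y : FreeMonoid α} (h : RwStep R x y) (u v : FreeMonoid α) :
    RwStep R (u * x * v) (u * y * v) := by
  obtain ⟨f, rfl, rfl⟩ := h
  exact ⟨f.whisker u v, f.src_whisker u v, f.tgt_whisker u v⟩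

namespace Joinable

protected theorem refl (x : FreeMonoid α) : Joinable R x x :=
  ⟨x, .refl, .refl⟩

protected theorem symm {x y : FreeMonoid α} (h : Joinable R x y) : Joinable R y x :=
  let ⟨w, hx, hy⟩ := h
  ⟨w, hy, hx⟩

theorem mul_mul {x y : FreeMonoid α} (h : Joinable R x y) (u v : FreeMonoid α) :
    Joinable R (u * x * v) (u * y * v) := by
  obtain ⟨w, hx, hy⟩ := h
  have lift_mul_mul := ReflTransGen.lift (r := RwStep R) (fun z ↦ u * z * v)
    fun _ _ hz ↦ hz.mul_mul u v
  exact ⟨u * w * v, lift_mul_mul _ _ hx, lift_mul_mul _ _ hy⟩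

end Joinable

theorem PeifferOriented.joinable_tgt (h : PeifferOriented f g) : Joinable R f.tgt g.tgt := by
  obtain ⟨v, hgleft, hfright⟩ := h
  have rewrite_g := RwStep.of_mem g.rule_mem (f.left * f.rule.2 * v) g.right
  have rewrite_f := RwStep.of_mem f.rule_mem f.left (v * g.rule.2 * g.right)
  refine ⟨f.left * f.rule.2 * v * g.rule.2 * g.right, .single ?_, .single ?_⟩
  · simpa only [Step.tgt, hfright, mul_assoc] using rewrite_g
  · simpa only [Step.tgt, hgleft, mul_assoc] using rewrite_f

theorem Peiffer.joinable_tgt (h : Peiffer f g) : Joinable R f.tgt g.tgt :=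
  h.elim PeifferOriented.joinable_tgt fun hgf ↦ hgf.joinable_tgt.symm

namespace BranchLE

protected theorem refl (p : Step R × Step R) : BranchLE p p :=
  ⟨1, 1, p.1.whisker_one_one.symm, p.2.whisker_one_one.symm⟩

protected theorem trans {p q r : Step R × Step R} (hpq : BranchLE p q) (hqr : BranchLE q r) :
    BranchLE p r := by
  obtain ⟨u', v', hq₁, hq₂⟩ := hpq
  obtain ⟨u, v, hr₁, hr₂⟩ := hqr
  refine ⟨u * u', v' * v, ?_, ?_⟩
  · rw [hr₁, hq₁, Step.whisker_whisker]
  · rw [hr₂, hq₂, Step.whisker_whisker]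

theorem eq_of_length_src_le {p q : Step R × Step R} (h : BranchLE p q)
    (hlength : q.1.src.length ≤ p.1.src.length) : p = q := by
  obtain ⟨u, v, hq₁, hq₂⟩ := h
  rw [hq₁, Step.src_whisker, FreeMonoid.length_mul, FreeMonoid.length_mul] at hlength
  obtain rfl : u = 1 := FreeMonoid.length_eq_zero.1 (by lia)
  obtain rfl : v = 1 := FreeMonoid.length_eq_zero.1 (by lia)
  rw [Step.whisker_one_one] at hq₁ hq₂
  exact Prod.ext hq₁.symm hq₂.symm

theorem joinable_tgt {p q : Step R × Step R} (h : BranchLE p q)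
    (hp : Joinable R p.1.tgt p.2.tgt) : Joinable R q.1.tgt q.2.tgt := by
  obtain ⟨u, v, hq₁, hq₂⟩ := h
  rw [hq₁, hq₂, Step.tgt_whisker, Step.tgt_whisker]
  exact hp.mul_mul u v

end BranchLE

-- Whiskering by a nontrivial context lengthens the source, so an overlapping branching of shortest
-- source among those below `(f, g)` is minimal.
theorem Overlapping.exists_critical_branchLE (h : Overlapping f g) :
    ∃ f' g' : Step R, Critical f' g' ∧ BranchLE (f', g') (f, g) := by
  let below : Set (Step R × Step R) := {p | Overlapping p.1 p.2 ∧ BranchLE p (f, g)}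
  obtain ⟨⟨f', g'⟩, ⟨hoverlap, hle⟩, hmin⟩ := exists_minimalFor_of_wellFoundedLT
    (· ∈ below) (fun p ↦ p.1.src.length) ⟨(f, g), h, BranchLE.refl (f, g)⟩
  refine ⟨f', g', ⟨hoverlap, fun f'' g'' hoverlap'' hle'' ↦ ?_⟩, hle⟩
  exact hle''.eq_of_length_src_le
    ((le_total _ _).elim id (hmin ⟨hoverlap'', hle''.trans hle⟩))

end Rewriting

/-- If every critical branching is joinable, then `→_R` is locally confluent. -/
theorem local_confluence_of_critical_joinable {α : Type*}
    (R : Set (FreeMonoid α × FreeMonoid α))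
    (hcrit : ∀ f g : Step R, Critical f g → Joinable R f.tgt g.tgt) :
    ∀ f g : Step R, f.src = g.src → Joinable R f.tgt g.tgt := by
  intro f g hsrc
  by_cases haspherical : f = g
  · exact haspherical ▸ Joinable.refl f.tgt
  by_cases hpeiffer : Peiffer f g
  · exact hpeiffer.joinable_tgt
  have hoverlap : Overlapping f g := ⟨hsrc, haspherical, hpeiffer⟩
  obtain ⟨f', g', hcritical, hle⟩ := hoverlap.exists_critical_branchLE
  exact hle.joinable_tgt (hcrit f' g' hcritical)
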